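/- Let {X_n, n≥1} satisfy the φ-mixing condition (1) with rate r>2 and constant C>0, and the moment condition (2) with exponent α ∈ (0,1) and ν_α = sup_n E|X_n|^{1+α}, and let φ = Σ_{m=1}^∞ φ(m)^{1/2}. Let b>0, Y_k = X_k·1(|X_k|≤b) − E(X_k·1(|X_k|≤b)), and for integers m, l ≥ 1 define ξ_i = Σ_{j=1}^m Y_{2(i−1)m+j} for 1 ≤ i ≤ l. Let 0 < ε ≤ 1/2 and θ > 0 satisfy 2θ·m·b ≤ ε. Then E( exp( 2θ Σ_{i=1}^{l} ξ_i ) ) ≤ exp( e^ε φ(m) l ) · exp( 2θ²·m·l·ν_α·(1+4φ)·b^{1−α}·(1+ε) ), and the same bound holds for the even blocks η_i = Σ_{j=1}^m Y_{(2i−1)m+j}, 1 ≤ i ≤ l. -/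

import Mathlib

open MeasureTheory ProbabilityTheory Finset

noncomputable def phiCoef {Ω : Type*} [MeasurableSpace Ω] (μ : Measure Ω)
    (X : ℕ → Ω → ℝ) (m : ℕ) : ℝ :=
  sSup {x : ℝ | ∃ k : ℕ, 1 ≤ k ∧ ∃ A B : Set Ω,
    MeasurableSet[⨆ i ∈ Set.Icc 1 k, MeasurableSpace.comap (X i) inferInstance] A ∧
    MeasurableSet[⨆ i ∈ Set.Ici (k + m), MeasurableSpace.comap (X i) inferInstance] B ∧
    0 < μ A ∧
    x = |(μ (B ∩ A)).toReal / (μ A).toReal - (μ B).toReal|}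

noncomputable def phiSum {Ω : Type*} [MeasurableSpace Ω] (μ : Measure Ω)
    (X : ℕ → Ω → ℝ) : ℝ :=
  ∑' m : ℕ, Real.sqrt (phiCoef μ X (m + 1))

noncomputable def tailPart {Ω : Type*} [MeasurableSpace Ω] (μ : Measure Ω)
    (X : ℕ → Ω → ℝ) (b : ℝ) (k : ℕ) (ω : Ω) : ℝ :=
  (if b < |X k ω| then X k ω else 0) - ∫ ω', (if b < |X k ω'| then X k ω' else 0) ∂μ

noncomputable def mainPart {Ω : Type*} [MeasurableSpace Ω] (μ : Measure Ω)
    (X : ℕ → Ω → ℝ) (b : ℝ) (k : ℕ) (ω : Ω) : ℝ :=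
  (if |X k ω| ≤ b then X k ω else 0) - ∫ ω', (if |X k ω'| ≤ b then X k ω' else 0) ∂μ

section FinitelyValued

variable {Ω : Type*} {𝒢 ℱ : MeasurableSpace Ω} [m0 : MeasurableSpace Ω] {μ : Measure Ω}
  [IsProbabilityMeasure μ]

/-- The integral of a function of a finitely valued random element. -/
lemma integral_comp_eq_sum_of_forall_mem {ι : Type*} (u : Ω → ι) (S : Finset ι)
    (hS : ∀ ω, u ω ∈ S) (hu : ∀ i, MeasurableSet (u ⁻¹' {i})) (h : ι → ℝ) :
    ∫ ω, h (u ω) ∂μ = ∑ i ∈ S, μ.real (u ⁻¹' {i}) * h i := by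
  classical
  have key : ∀ ω, h (u ω) = ∑ i ∈ S, (u ⁻¹' {i}).indicator (fun _ => h i) ω := by
    intro ω
    rw [Finset.sum_eq_single_of_mem (u ω) (hS ω)]
    · simp
    · intro i _ hi
      rw [Set.indicator_of_notMem]
      simpa using hi.symm
  simp_rw [key]
  rw [integral_finsetSum]
  · refine Finset.sum_congr rfl fun i _ => ?_
    rw [integral_indicator_const _ (hu i), smul_eq_mul]
  · intro i _
    exact (integrable_const _).indicator (hu i)

/-- `μ(A ∩ {v ∈ J}) - μ(A) μ(v ∈ J)` is additive over the values of `v`. -/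
lemma sum_covariance_preimage {κ : Type*} (hℱ : ℱ ≤ m0) (A : Set Ω) (v : Ω → κ)
    (hA : MeasurableSet A) (hv : ∀ j, MeasurableSet[ℱ] (v ⁻¹' {j})) (J : Finset κ) :
    MeasurableSet[ℱ] (⋃ j ∈ J, v ⁻¹' {j}) ∧
    ∑ j ∈ J, (μ.real (A ∩ v ⁻¹' {j}) - μ.real A * μ.real (v ⁻¹' {j})) =
      μ.real (A ∩ ⋃ j ∈ J, v ⁻¹' {j}) - μ.real A * μ.real (⋃ j ∈ J, v ⁻¹' {j}) := by
  have hd : ∀ i j : κ, i ≠ j → Disjoint (v ⁻¹' {i}) (v ⁻¹' {j}) := fun i j hij =>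
    Disjoint.preimage _ (by simpa using hij)
  refine ⟨Finset.measurableSet_biUnion _ fun j _ => hv j, ?_⟩
  rw [Set.inter_iUnion₂, measureReal_biUnion_finset, measureReal_biUnion_finset,
    Finset.sum_sub_distrib, Finset.mul_sum]
  · exact fun i _ j _ hij => hd i j hij
  · exact fun j _ => hℱ _ (hv j)
  · exact fun i _ j _ hij => (hd i j hij).mono Set.inter_subset_right Set.inter_subset_right
  · exact fun j _ => hA.inter (hℱ _ (hv j))

lemma sum_posPart_covariance_le {κ : Type*} (hℱ : ℱ ≤ m0) {ϕ : ℝ} {A : Set Ω} {v : Ω → κ}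
    (hA : MeasurableSet A)
    (H : ∀ B, MeasurableSet[ℱ] B → |μ.real (A ∩ B) - μ.real A * μ.real B| ≤ ϕ * μ.real A)
    (hv : ∀ j, MeasurableSet[ℱ] (v ⁻¹' {j})) (J : Finset κ) {c : ℝ} (hc : |c| = 1) :
    ∑ j ∈ J, max (c * (μ.real (A ∩ v ⁻¹' {j}) - μ.real A * μ.real (v ⁻¹' {j}))) 0 ≤
      ϕ * μ.real A := by
  classical
  obtain ⟨h1, h2⟩ := sum_covariance_preimage (μ := μ) hℱ A v hA hv
    (J.filter fun j => 0 ≤ c * (μ.real (A ∩ v ⁻¹' {j}) - μ.real A * μ.real (v ⁻¹' {j})))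
  have h3 := H _ h1
  rw [← h2, ← one_mul |_|, ← hc, ← abs_mul, Finset.mul_sum, Finset.sum_filter] at h3
  refine le_trans (le_of_eq ?_) ((le_abs_self _).trans h3)
  refine Finset.sum_congr rfl fun j _ => ?_
  split_ifs with h
  · exact max_eq_left h
  · exact max_eq_right (not_le.mp h).le

lemma sum_abs_covariance_le {κ : Type*} (hℱ : ℱ ≤ m0) {ϕ : ℝ} {A : Set Ω} {v : Ω → κ}
    (hA : MeasurableSet A)
    (H : ∀ B, MeasurableSet[ℱ] B → |μ.real (A ∩ B) - μ.real A * μ.real B| ≤ ϕ * μ.real A)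
    (hv : ∀ j, MeasurableSet[ℱ] (v ⁻¹' {j})) (J : Finset κ) :
    ∑ j ∈ J, |μ.real (A ∩ v ⁻¹' {j}) - μ.real A * μ.real (v ⁻¹' {j})| ≤
      2 * ϕ * μ.real A := by
  have h1 := sum_posPart_covariance_le (μ := μ) hℱ hA H hv J (c := 1) (by simp)
  have h2 := sum_posPart_covariance_le (μ := μ) hℱ hA H hv J (c := -1) (by simp)
  have h3 : ∀ x : ℝ, |x| = max (1 * x) 0 + max (-1 * x) 0 := by
    intro x
    rcases le_total 0 x with h | h
    · rw [abs_of_nonneg h, max_eq_left (by linarith), max_eq_right (by linarith)]; ring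
    · rw [abs_of_nonpos h, max_eq_right (by linarith), max_eq_left (by linarith)]; ring
  simp_rw [h3]
  rw [Finset.sum_add_distrib]
  linarith

/-- Weighted Cauchy–Schwarz for a double sum. -/
lemma sum_mul_mul_sq_le {ι κ : Type*} (S : Finset ι) (J : Finset κ) (f : ι → ℝ) (g : κ → ℝ)
    (D : ι → κ → ℝ) :
    (∑ i ∈ S, ∑ j ∈ J, D i j * (f i * g j)) ^ 2 ≤
      (∑ i ∈ S, f i ^ 2 * ∑ j ∈ J, |D i j|) * ∑ j ∈ J, g j ^ 2 * ∑ i ∈ S, |D i j| := by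
  have := Finset.sum_sq_le_sum_mul_sum_of_sq_le_mul (S ×ˢ J)
    (r := fun p => D p.1 p.2 * (f p.1 * g p.2))
    (f := fun p => f p.1 ^ 2 * |D p.1 p.2|) (g := fun p => g p.2 ^ 2 * |D p.1 p.2|)
    (fun _ _ => by positivity) (fun _ _ => by positivity) (fun p _ => by
      rw [mul_mul_mul_comm, abs_mul_abs_self]
      exact le_of_eq (by ring))
  rw [Finset.sum_product, Finset.sum_product, Finset.sum_product_right] at this
  simpa only [Finset.mul_sum] using this

/-- Covariance of functions of finitely valued random elements as a double sum. -/
lemma covariance_eq_double_sum {ι κ : Type*} (h𝒢 : 𝒢 ≤ m0) (hℱ : ℱ ≤ m0)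
    {u : Ω → ι} {v : Ω → κ} {S : Finset ι} {J : Finset κ}
    (hS : ∀ ω, u ω ∈ S) (hJ : ∀ ω, v ω ∈ J)
    (hu : ∀ i, MeasurableSet[𝒢] (u ⁻¹' {i})) (hv : ∀ j, MeasurableSet[ℱ] (v ⁻¹' {j}))
    (f : ι → ℝ) (g : κ → ℝ) :
    ∫ ω, f (u ω) * g (v ω) ∂μ - (∫ ω, f (u ω) ∂μ) * ∫ ω, g (v ω) ∂μ =
      ∑ i ∈ S, ∑ j ∈ J,
        (μ.real (u ⁻¹' {i} ∩ v ⁻¹' {j}) - μ.real (u ⁻¹' {i}) * μ.real (v ⁻¹' {j})) *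
          (f i * g j) := by
  have hpre : ∀ p : ι × κ, (fun ω => (u ω, v ω)) ⁻¹' {p} = u ⁻¹' {p.1} ∩ v ⁻¹' {p.2} := by
    intro p; ext ω; simp [Prod.ext_iff]
  have h1 := integral_comp_eq_sum_of_forall_mem (μ := μ) (fun ω => (u ω, v ω)) (S ×ˢ J)
    (fun ω => Finset.mk_mem_product (hS ω) (hJ ω))
    (fun p => by rw [hpre]; exact (h𝒢 _ (hu _)).inter (hℱ _ (hv _)))
    (fun p => f p.1 * g p.2)
  simp only [hpre] at h1
  rw [h1, integral_comp_eq_sum_of_forall_mem u S hS (fun i => h𝒢 _ (hu i)),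
    integral_comp_eq_sum_of_forall_mem v J hJ (fun i => hℱ _ (hv i)), Finset.sum_product,
    Finset.sum_mul_sum, ← Finset.sum_sub_distrib]
  refine Finset.sum_congr rfl fun i _ => ?_
  rw [← Finset.sum_sub_distrib]
  exact Finset.sum_congr rfl fun j _ => by ring

lemma covariance_sq_le_of_finite {ι κ : Type*} (h𝒢 : 𝒢 ≤ m0) (hℱ : ℱ ≤ m0)
    {ϕ : ℝ} (hϕ : 0 ≤ ϕ) (H : ∀ A B, MeasurableSet[𝒢] A → MeasurableSet[ℱ] B →
      |μ.real (A ∩ B) - μ.real A * μ.real B| ≤ ϕ * μ.real A)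
    {u : Ω → ι} {v : Ω → κ} {S : Finset ι} {J : Finset κ}
    (hS : ∀ ω, u ω ∈ S) (hJ : ∀ ω, v ω ∈ J)
    (hu : ∀ i, MeasurableSet[𝒢] (u ⁻¹' {i})) (hv : ∀ j, MeasurableSet[ℱ] (v ⁻¹' {j}))
    (f : ι → ℝ) (g : κ → ℝ) :
    (∫ ω, f (u ω) * g (v ω) ∂μ - (∫ ω, f (u ω) ∂μ) * ∫ ω, g (v ω) ∂μ) ^ 2 ≤
      4 * ϕ * (∫ ω, f (u ω) ^ 2 ∂μ) * ∫ ω, g (v ω) ^ 2 ∂μ := by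
  rw [covariance_eq_double_sum h𝒢 hℱ hS hJ hu hv]
  refine (sum_mul_mul_sq_le S J f g _).trans ?_
  rw [integral_comp_eq_sum_of_forall_mem u S hS (fun i => h𝒢 _ (hu i)) (fun i => f i ^ 2),
    integral_comp_eq_sum_of_forall_mem v J hJ (fun i => hℱ _ (hv i)) (fun j => g j ^ 2)]
  have hrow : ∑ i ∈ S, f i ^ 2 * ∑ j ∈ J,
      |μ.real (u ⁻¹' {i} ∩ v ⁻¹' {j}) - μ.real (u ⁻¹' {i}) * μ.real (v ⁻¹' {j})| ≤
      2 * ϕ * ∑ i ∈ S, μ.real (u ⁻¹' {i}) * f i ^ 2 := by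
    rw [Finset.mul_sum]
    refine Finset.sum_le_sum fun i _ => ?_
    have := sum_abs_covariance_le (μ := μ) hℱ (h𝒢 _ (hu i)) (fun B => H _ B (hu i)) hv J
    nlinarith [sq_nonneg (f i)]
  have hcol : ∑ j ∈ J, g j ^ 2 * ∑ i ∈ S,
      |μ.real (u ⁻¹' {i} ∩ v ⁻¹' {j}) - μ.real (u ⁻¹' {i}) * μ.real (v ⁻¹' {j})| ≤
      2 * ∑ j ∈ J, μ.real (v ⁻¹' {j}) * g j ^ 2 := by
    rw [Finset.mul_sum]
    refine Finset.sum_le_sum fun j _ => ?_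
    have hBle : ∀ A : Set Ω, μ.real A ≤ 1 := fun A => measureReal_le_one
    have := sum_abs_covariance_le (μ := μ) (ϕ := 1) (ℱ := 𝒢) (A := v ⁻¹' {j}) (v := u) h𝒢
      (hℱ _ (hv j)) (fun B _ => by
        rw [one_mul, abs_le]
        have h1 : μ.real (v ⁻¹' {j} ∩ B) ≤ μ.real (v ⁻¹' {j}) :=
          measureReal_mono Set.inter_subset_left
        have h2 : 0 ≤ μ.real (v ⁻¹' {j} ∩ B) := measureReal_nonneg
        have h3 : 0 ≤ μ.real B := measureReal_nonneg
        have h4 : 0 ≤ μ.real (v ⁻¹' {j}) := measureReal_nonneg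
        have h5 := hBle B
        constructor <;> nlinarith) hu S
    simp only [Set.inter_comm (v ⁻¹' {j}), mul_comm (μ.real (v ⁻¹' {j}))] at this
    nlinarith [sq_nonneg (g j)]
  calc _ ≤ (2 * ϕ * ∑ i ∈ S, μ.real (u ⁻¹' {i}) * f i ^ 2) *
        (2 * ∑ j ∈ J, μ.real (v ⁻¹' {j}) * g j ^ 2) := by
        refine mul_le_mul hrow hcol ?_ ?_
        · exact Finset.sum_nonneg fun j _ =>
            mul_nonneg (sq_nonneg _) (Finset.sum_nonneg fun _ _ => abs_nonneg _)
        · exact mul_nonneg (by positivity) (Finset.sum_nonneg fun i _ =>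
            mul_nonneg measureReal_nonneg (sq_nonneg _))
    _ = _ := by ring

lemma integral_mul_le_of_finite {ι κ : Type*} (h𝒢 : 𝒢 ≤ m0) (hℱ : ℱ ≤ m0)
    {ϕ : ℝ} (H : ∀ A B, MeasurableSet[𝒢] A → MeasurableSet[ℱ] B →
      |μ.real (A ∩ B) - μ.real A * μ.real B| ≤ ϕ * μ.real A)
    {u : Ω → ι} {v : Ω → κ} {S : Finset ι} {J : Finset κ}
    (hS : ∀ ω, u ω ∈ S) (hJ : ∀ ω, v ω ∈ J)
    (hu : ∀ i, MeasurableSet[𝒢] (u ⁻¹' {i})) (hv : ∀ j, MeasurableSet[ℱ] (v ⁻¹' {j}))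
    (f : ι → ℝ) (g : κ → ℝ) {d : ℝ} (hf : ∀ i, 0 ≤ f i) (hg0 : ∀ j, 0 ≤ g j)
    (hgd : ∀ j, g j ≤ d) :
    ∫ ω, f (u ω) * g (v ω) ∂μ ≤ (∫ ω, f (u ω) ∂μ) * (∫ ω, g (v ω) ∂μ + ϕ * d) := by
  have h := covariance_eq_double_sum (μ := μ) h𝒢 hℱ hS hJ hu hv f g
  suffices hs : ∑ i ∈ S, ∑ j ∈ J,
      (μ.real (u ⁻¹' {i} ∩ v ⁻¹' {j}) - μ.real (u ⁻¹' {i}) * μ.real (v ⁻¹' {j})) *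
        (f i * g j) ≤ (∫ ω, f (u ω) ∂μ) * (ϕ * d) by
    rw [← h] at hs; linarith
  rw [integral_comp_eq_sum_of_forall_mem u S hS (fun i => h𝒢 _ (hu i)) f, Finset.sum_mul]
  refine Finset.sum_le_sum fun i _ => ?_
  have hpos := sum_posPart_covariance_le (μ := μ) hℱ (h𝒢 _ (hu i)) (fun B => H _ B (hu i)) hv J
    (c := 1) (by simp)
  simp only [one_mul] at hpos
  set D : κ → ℝ := fun j =>
    μ.real (u ⁻¹' {i} ∩ v ⁻¹' {j}) - μ.real (u ⁻¹' {i}) * μ.real (v ⁻¹' {j}) with hD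
  calc ∑ j ∈ J, D j * (f i * g j) ≤ ∑ j ∈ J, (f i * d) * max (D j) 0 := by
        refine Finset.sum_le_sum fun j _ => ?_
        calc D j * (f i * g j) ≤ max (D j) 0 * (f i * g j) :=
              mul_le_mul_of_nonneg_right (le_max_left _ _) (mul_nonneg (hf i) (hg0 j))
          _ ≤ max (D j) 0 * (f i * d) := mul_le_mul_of_nonneg_left
              (mul_le_mul_of_nonneg_left (hgd j) (hf i)) (le_max_right _ _)
          _ = _ := mul_comm _ _
    _ = (f i * d) * ∑ j ∈ J, max (D j) 0 := by rw [Finset.mul_sum]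
    _ ≤ (f i * d) * (ϕ * μ.real (u ⁻¹' {i})) := by
        rcases J.eq_empty_or_nonempty with rfl | ⟨j, _⟩
        · have : IsEmpty Ω := ⟨fun ω => by simpa using hJ ω⟩
          simp [Measure.real, Measure.eq_zero_of_isEmpty μ]
        · exact mul_le_mul_of_nonneg_left hpos (mul_nonneg (hf i) ((hg0 j).trans (hgd j)))
    _ = _ := by ring

end FinitelyValued

section Bounded

open Filter Topology

lemma tendsto_int_floor_nat_mul_div (x : ℝ) :
    Tendsto (fun n : ℕ => (⌊(n : ℝ) * x⌋ : ℝ) / n) atTop (𝓝 x) := by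
  have h1 : Tendsto (fun n : ℕ => x - 1 / (n : ℝ)) atTop (𝓝 x) := by
    simpa using tendsto_const_nhds.sub (tendsto_one_div_atTop_nhds_zero_nat (𝕜 := ℝ))
  refine tendsto_of_tendsto_of_tendsto_of_le_of_le' h1 tendsto_const_nhds ?_ ?_
  · filter_upwards [eventually_gt_atTop 0] with n hn
    have hn' : (0 : ℝ) < n := by exact_mod_cast hn
    rw [le_div_iff₀ hn', sub_mul, one_div, inv_mul_cancel₀ hn'.ne']
    linarith [Int.sub_one_lt_floor ((n : ℝ) * x)]
  · filter_upwards [eventually_gt_atTop 0] with n hn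
    have hn' : (0 : ℝ) < n := by exact_mod_cast hn
    rw [div_le_iff₀ hn']
    linarith [Int.floor_le ((n : ℝ) * x)]

lemma abs_int_floor_nat_mul_le (x : ℝ) (n : ℕ) :
    |(⌊(n : ℝ) * x⌋ : ℝ)| ≤ n * |x| + 1 := by
  have h1 := Int.sub_one_lt_floor ((n : ℝ) * x)
  have h2 := Int.floor_le ((n : ℝ) * x)
  have hn : (0 : ℝ) ≤ n := Nat.cast_nonneg n
  have h3 := mul_le_mul_of_nonneg_left (le_abs_self x) hn
  have h4 := mul_le_mul_of_nonneg_left (neg_abs_le x) hn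
  rw [abs_le]
  constructor <;> linarith

lemma abs_int_floor_nat_mul_div_le (x : ℝ) (n : ℕ) :
    |(⌊(n : ℝ) * x⌋ : ℝ) / n| ≤ |x| + 1 := by
  rcases Nat.eq_zero_or_pos n with rfl | hn
  · simp; positivity
  · have hn' : (1 : ℝ) ≤ n := by exact_mod_cast hn
    rw [abs_div, Nat.abs_cast, div_le_iff₀ (by linarith)]
    linarith [abs_int_floor_nat_mul_le x n]

lemma int_floor_nat_mul_mem_Icc {x M : ℝ} (hx : |x| ≤ M) (n : ℕ) :
    ⌊(n : ℝ) * x⌋ ∈ Finset.Icc (-⌈(n : ℝ) * M + 1⌉) ⌈(n : ℝ) * M + 1⌉ := by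
  have h := (abs_int_floor_nat_mul_le x n).trans
    ((add_le_add_left (mul_le_mul_of_nonneg_left hx (Nat.cast_nonneg n)) 1).trans
      (Int.le_ceil _))
  rw [Finset.mem_Icc, ← abs_le]
  exact_mod_cast h

variable {Ω : Type*} {𝒢 ℱ : MeasurableSpace Ω} [m0 : MeasurableSpace Ω] {μ : Measure Ω}
  [IsProbabilityMeasure μ]

lemma tendsto_integral_discretization {U V : Ω → ℝ} (hU : Measurable U) (hV : Measurable V)
    {M : ℝ} (hUM : ∀ ω, |U ω| ≤ M) (hVM : ∀ ω, |V ω| ≤ M) {F : ℝ × ℝ → ℝ}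
    (hF : Continuous F) :
    Tendsto (fun n : ℕ => ∫ ω, F ((⌊(n : ℝ) * U ω⌋ : ℝ) / n, (⌊(n : ℝ) * V ω⌋ : ℝ) / n) ∂μ)
      atTop (𝓝 (∫ ω, F (U ω, V ω) ∂μ)) := by
  obtain ⟨K, hK⟩ := (isCompact_closedBall (0 : ℝ × ℝ) (M + 1)).exists_bound_of_continuousOn
    hF.continuousOn
  refine tendsto_integral_of_dominated_convergence (fun _ => K) (fun n => ?_)
    (integrable_const K) (fun n => ?_) ?_
  · refine (hF.measurable.comp ?_).aestronglyMeasurable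
    fun_prop
  · refine ae_of_all _ fun ω => hK _ ?_
    rw [mem_closedBall_zero_iff, Prod.norm_def, max_le_iff, Real.norm_eq_abs, Real.norm_eq_abs]
    exact ⟨(abs_int_floor_nat_mul_div_le _ n).trans (by linarith [hUM ω]),
      (abs_int_floor_nat_mul_div_le _ n).trans (by linarith [hVM ω])⟩
  · refine ae_of_all _ fun ω => ?_
    exact (hF.tendsto _).comp ((tendsto_int_floor_nat_mul_div _).prodMk_nhds
      (tendsto_int_floor_nat_mul_div _))

/-- Ibragimov's covariance inequality with both exponents equal to two. -/
lemma covariance_sq_le_of_phiMixing (h𝒢 : 𝒢 ≤ m0) (hℱ : ℱ ≤ m0)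
    {ϕ : ℝ} (hϕ : 0 ≤ ϕ) (H : ∀ A B, MeasurableSet[𝒢] A → MeasurableSet[ℱ] B →
      |μ.real (A ∩ B) - μ.real A * μ.real B| ≤ ϕ * μ.real A)
    {U V : Ω → ℝ} (hU : Measurable[𝒢] U) (hV : Measurable[ℱ] V)
    {M : ℝ} (hUM : ∀ ω, |U ω| ≤ M) (hVM : ∀ ω, |V ω| ≤ M) :
    (∫ ω, U ω * V ω ∂μ - (∫ ω, U ω ∂μ) * ∫ ω, V ω ∂μ) ^ 2 ≤
      4 * ϕ * (∫ ω, U ω ^ 2 ∂μ) * ∫ ω, V ω ^ 2 ∂μ := by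
  have L : ∀ {F : ℝ × ℝ → ℝ}, Continuous F → _ := fun {F} hF =>
    tendsto_integral_discretization (μ := μ) (hU.mono h𝒢 le_rfl) (hV.mono hℱ le_rfl) hUM hVM hF
  have l1 := L (F := fun p => p.1 * p.2) (by fun_prop)
  have l2 := L (F := fun p => p.1) (by fun_prop)
  have l3 := L (F := fun p => p.2) (by fun_prop)
  have l4 := L (F := fun p => p.1 ^ 2) (by fun_prop)
  have l5 := L (F := fun p => p.2 ^ 2) (by fun_prop)
  refine le_of_tendsto_of_tendsto' ((l1.sub (l2.mul l3)).pow 2)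
    ((tendsto_const_nhds.mul l4).mul l5) fun n => ?_
  have mf : Measurable fun x : ℝ => ⌊(n : ℝ) * x⌋ := by fun_prop
  exact covariance_sq_le_of_finite (μ := μ) h𝒢 hℱ hϕ H
    (fun ω => int_floor_nat_mul_mem_Icc (hUM ω) n) (fun ω => int_floor_nat_mul_mem_Icc (hVM ω) n)
    (fun i => (mf.comp hU) (measurableSet_singleton i))
    (fun i => (mf.comp hV) (measurableSet_singleton i))
    (fun i => (i : ℝ) / n) (fun i => (i : ℝ) / n)

lemma integral_mul_le_of_phiMixing (h𝒢 : 𝒢 ≤ m0) (hℱ : ℱ ≤ m0)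
    {ϕ : ℝ} (H : ∀ A B, MeasurableSet[𝒢] A → MeasurableSet[ℱ] B →
      |μ.real (A ∩ B) - μ.real A * μ.real B| ≤ ϕ * μ.real A)
    {W V : Ω → ℝ} (hW : Measurable[𝒢] W) (hV : Measurable[ℱ] V)
    {M c d : ℝ} (hW0 : ∀ ω, 0 ≤ W ω) (hWM : ∀ ω, W ω ≤ M) (hcV : ∀ ω, c ≤ V ω)
    (hVd : ∀ ω, V ω ≤ d) :
    ∫ ω, W ω * V ω ∂μ ≤ (∫ ω, W ω ∂μ) * (∫ ω, V ω ∂μ + ϕ * (d - c)) := by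
  obtain ⟨ω₀⟩ : Nonempty Ω := nonempty_of_isProbabilityMeasure μ
  have hcd : c ≤ d := (hcV ω₀).trans (hVd ω₀)
  set M' := max M (max |c| |d|)
  have hWM' : ∀ ω, |W ω| ≤ M' := fun ω => by
    rw [abs_of_nonneg (hW0 ω)]; exact (hWM ω).trans (le_max_left _ _)
  have hVM' : ∀ ω, |V ω| ≤ M' := fun ω =>
    (abs_le_max_abs_abs (hcV ω) (hVd ω)).trans (le_max_right _ _)
  have hWm := hW.mono h𝒢 le_rfl
  have hVm := hV.mono hℱ le_rfl
  have L : ∀ {F : ℝ × ℝ → ℝ}, Continuous F → _ := fun {F} hF =>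
    tendsto_integral_discretization (μ := μ) hWm hVm hWM' hVM' hF
  have l1 := L (F := fun p => max p.1 0 * (min (max p.2 c) d - c)) (by fun_prop)
  have l2 := L (F := fun p => max p.1 0) (by fun_prop)
  have l3 := L (F := fun p => min (max p.2 c) d - c) (by fun_prop)
  have key := le_of_tendsto_of_tendsto' l1 (l2.mul (l3.add_const (ϕ * (d - c)))) fun n => by
    have mf : Measurable fun x : ℝ => ⌊(n : ℝ) * x⌋ := by fun_prop
    exact integral_mul_le_of_finite (μ := μ) h𝒢 hℱ H
      (fun ω => int_floor_nat_mul_mem_Icc (hWM' ω) n)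
      (fun ω => int_floor_nat_mul_mem_Icc (hVM' ω) n)
      (fun i => (mf.comp hW) (measurableSet_singleton i))
      (fun i => (mf.comp hV) (measurableSet_singleton i))
      (fun i => max ((i : ℝ) / n) 0) (fun i => min (max ((i : ℝ) / n) c) d - c)
      (fun i => le_max_right _ _) (fun j => sub_nonneg.2 (le_min (le_max_right _ _) hcd))
      (fun j => sub_le_sub_right (min_le_right _ _) _)
  have iW : Integrable W μ := Integrable.of_bound hWm.aestronglyMeasurable M' (ae_of_all _ hWM')
  have iV : Integrable V μ := Integrable.of_bound hVm.aestronglyMeasurable M' (ae_of_all _ hVM')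
  have iWV : Integrable (fun ω => W ω * V ω) μ :=
    iV.bdd_mul hWm.aestronglyMeasurable (ae_of_all _ hWM')
  simp only [max_eq_left (hW0 _), max_eq_left (hcV _), min_eq_left (hVd _), mul_sub] at key
  rw [integral_sub iWV (iW.mul_const c), integral_mul_const, integral_sub iV (integrable_const c),
    integral_const] at key
  simp only [probReal_univ, one_smul] at key
  linarith

end Bounded

section PhiCoef

variable {Ω : Type*} [MeasurableSpace Ω] {μ : Measure Ω} {X : ℕ → Ω → ℝ}

/-- The σ-algebra generated by `X 1, …, X k`. -/
abbrev pastSigma (X : ℕ → Ω → ℝ) (k : ℕ) : MeasurableSpace Ω :=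
  ⨆ i ∈ Set.Icc 1 k, MeasurableSpace.comap (X i) inferInstance

/-- The σ-algebra generated by `X n, X (n + 1), …`. -/
abbrev futureSigma (X : ℕ → Ω → ℝ) (n : ℕ) : MeasurableSpace Ω :=
  ⨆ i ∈ Set.Ici n, MeasurableSpace.comap (X i) inferInstance

lemma pastSigma_le (hX : ∀ n, Measurable (X n)) (k : ℕ) : pastSigma X k ≤ ‹MeasurableSpace Ω› :=
  iSup₂_le fun i _ => (hX i).comap_le

lemma futureSigma_le (hX : ∀ n, Measurable (X n)) (n : ℕ) :
    futureSigma X n ≤ ‹MeasurableSpace Ω› :=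
  iSup₂_le fun i _ => (hX i).comap_le

lemma phiCoef_nonneg (X : ℕ → Ω → ℝ) (m : ℕ) : 0 ≤ phiCoef μ X m := by
  refine Real.sSup_nonneg ?_
  rintro x ⟨k, -, A, B, -, -, -, rfl⟩
  exact abs_nonneg _

lemma summable_sqrt_phiCoef {r C : ℝ} (hr : 2 < r) (hC : 0 < C)
    (hmix : ∀ m : ℕ, 1 ≤ m → phiCoef μ X m ≤ C * ((m : ℝ) + 1) ^ (-r)) :
    Summable fun m : ℕ => Real.sqrt (phiCoef μ X (m + 1)) := by
  have h : Summable fun m : ℕ => Real.sqrt C * ((m + 2 : ℕ) : ℝ) ^ (-r / 2) :=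
    ((summable_nat_add_iff 2).2 (Real.summable_nat_rpow.2 (by linarith))).mul_left _
  refine h.of_nonneg_of_le (fun _ => Real.sqrt_nonneg _) fun m => ?_
  refine (Real.sqrt_le_sqrt (hmix (m + 1) (by omega))).trans (le_of_eq ?_)
  have hx : (0 : ℝ) ≤ ((m + 2 : ℕ) : ℝ) := Nat.cast_nonneg _
  rw [Real.sqrt_mul hC.le, Real.sqrt_eq_rpow (_ ^ _)]
  have : (((m + 1 : ℕ) : ℝ) + 1) = ((m + 2 : ℕ) : ℝ) := by push_cast; ring
  rw [this, ← Real.rpow_mul hx]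
  congr 2
  ring

variable [IsProbabilityMeasure μ]

lemma abs_div_measureReal_sub_le_one (A B : Set Ω) :
    |(μ (B ∩ A)).toReal / (μ A).toReal - (μ B).toReal| ≤ 1 := by
  have h1 : μ.real (B ∩ A) / μ.real A ≤ 1 :=
    div_le_one_of_le₀ (measureReal_mono Set.inter_subset_right) measureReal_nonneg
  have h2 : 0 ≤ μ.real (B ∩ A) / μ.real A := div_nonneg measureReal_nonneg measureReal_nonneg
  have h3 : μ.real B ≤ 1 := measureReal_le_one
  have h4 : 0 ≤ μ.real B := measureReal_nonneg
  simp only [Measure.real] at h1 h2 h3 h4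
  rw [abs_le]
  constructor <;> linarith

lemma bddAbove_phiCoef_set (X : ℕ → Ω → ℝ) (m : ℕ) :
    BddAbove {x : ℝ | ∃ k : ℕ, 1 ≤ k ∧ ∃ A B : Set Ω,
      MeasurableSet[⨆ i ∈ Set.Icc 1 k, MeasurableSpace.comap (X i) inferInstance] A ∧
      MeasurableSet[⨆ i ∈ Set.Ici (k + m), MeasurableSpace.comap (X i) inferInstance] B ∧
      0 < μ A ∧ x = |(μ (B ∩ A)).toReal / (μ A).toReal - (μ B).toReal|} := by
  refine ⟨1, ?_⟩
  rintro x ⟨k, -, A, B, -, -, -, rfl⟩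
  exact abs_div_measureReal_sub_le_one A B

lemma phiCoef_le_one (X : ℕ → Ω → ℝ) (m : ℕ) : phiCoef μ X m ≤ 1 := by
  refine Real.sSup_le ?_ zero_le_one
  rintro x ⟨k, -, A, B, -, -, -, rfl⟩
  exact abs_div_measureReal_sub_le_one A B

lemma phiCoef_antitone (X : ℕ → Ω → ℝ) : Antitone (phiCoef μ X) := by
  intro m n hmn
  refine Real.sSup_le ?_ (phiCoef_nonneg X m)
  rintro x ⟨k, hk, A, B, hA, hB, hA0, rfl⟩
  refine le_csSup (bddAbove_phiCoef_set X m) ⟨k, hk, A, B, hA, ?_, hA0, rfl⟩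
  have hle : futureSigma X (k + n) ≤ futureSigma X (k + m) :=
    biSup_mono fun i hi => le_trans (Nat.add_le_add_left hmn k) hi
  exact hle B hB

lemma abs_measureReal_inter_sub_le_phiCoef (X : ℕ → Ω → ℝ) {k m : ℕ} (hk : 1 ≤ k)
    (A B : Set Ω) (hA : MeasurableSet[pastSigma X k] A)
    (hB : MeasurableSet[futureSigma X (k + m)] B) :
    |μ.real (A ∩ B) - μ.real A * μ.real B| ≤ phiCoef μ X m * μ.real A := by
  rcases eq_or_ne (μ A) 0 with h0 | h0
  · have h1 : μ.real A = 0 := by simp [Measure.real, h0]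
    have h2 : μ.real (A ∩ B) = 0 := measureReal_mono_null Set.inter_subset_left h1
    simp [h1, h2]
  · have hpos : 0 < μ.real A := ENNReal.toReal_pos h0 (measure_ne_top _ _)
    have h := le_csSup (bddAbove_phiCoef_set (μ := μ) X m)
      ⟨k, hk, A, B, hA, hB, pos_iff_ne_zero.2 h0, rfl⟩
    change |μ.real (B ∩ A) / μ.real A - μ.real B| ≤ phiCoef μ X m at h
    calc |μ.real (A ∩ B) - μ.real A * μ.real B|
        = |μ.real (B ∩ A) / μ.real A - μ.real B| * μ.real A := by
          rw [← abs_of_pos hpos, ← abs_mul, abs_of_pos hpos, sub_mul,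
            div_mul_cancel₀ _ hpos.ne', Set.inter_comm, mul_comm (μ.real B)]
      _ ≤ _ := mul_le_mul_of_nonneg_right h hpos.le

end PhiCoef

section Elementary

lemma sum_Icc_one_eq_sum_range {E : Type*} [AddCommMonoid E] (f : ℕ → E) (n : ℕ) :
    ∑ j ∈ Finset.Icc 1 n, f j = ∑ j ∈ Finset.range n, f (j + 1) := by
  induction n with
  | zero => simp
  | succ n ih => rw [Finset.sum_Icc_succ_top (by omega), ih, Finset.sum_range_succ]

/-- For a nonincreasing sequence the average of the partial sums falls short of the full sum. -/
lemma sum_partial_sums_le {s : ℕ → ℝ} (hs : Antitone s) (hs0 : ∀ k, 0 ≤ s k) {m : ℕ} {Φ : ℝ}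
    (hΦ : ∑ k ∈ Finset.range m, s (k + 1) ≤ Φ) :
    ∑ p ∈ Finset.range m, ∑ k ∈ Finset.range p, s (k + 1) + (m : ℝ) ^ 2 / 2 * s m ≤ m * Φ := by
  have h1 : ∀ p ∈ Finset.range m,
      ∑ k ∈ Finset.range p, s (k + 1) ≤ Φ - ((m : ℝ) - p) * s m := by
    intro p hp
    have hpm : p ≤ m := (Finset.mem_range.1 hp).le
    have h2 := Finset.sum_range_add_sum_Ico (fun k => s (k + 1)) hpm
    have h3 : ((m : ℝ) - p) * s m ≤ ∑ k ∈ Finset.Ico p m, s (k + 1) := by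
      have := Finset.card_nsmul_le_sum (Finset.Ico p m) (fun k => s (k + 1)) (s m)
        fun k hk => hs (Finset.mem_Ico.1 hk).2
      rwa [Nat.card_Ico, nsmul_eq_mul, Nat.cast_sub hpm] at this
    linarith
  have h2 : ∀ (c : ℝ) (n : ℕ), ∑ p ∈ Finset.range n, (c - p) = n * c - n * (n - 1) / 2 := by
    intro c n
    induction n with
    | zero => simp
    | succ n ih => rw [Finset.sum_range_succ, ih]; push_cast; ring
  have h3 := Finset.sum_le_sum h1
  rw [Finset.sum_sub_distrib, Finset.sum_const, Finset.card_range, nsmul_eq_mul,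
    ← Finset.sum_mul, h2] at h3
  have h4 : 0 ≤ (m : ℝ) * s m := mul_nonneg (Nat.cast_nonneg _) (hs0 m)
  nlinarith

lemma exp_le_of_abs_le {x ε : ℝ} (hx : |x| ≤ 2 * ε) (hε : ε ≤ 1 / 2) :
    Real.exp x ≤ 1 + x + x ^ 2 * ((1 + ε) / 2) := by
  have h := (abs_le.1 (Real.exp_bound (x := x) (by linarith) (n := 3) (by norm_num))).2
  simp only [Finset.sum_range_succ, Finset.sum_range_zero, Nat.factorial] at h
  norm_num at h
  have h1 : |x| ^ 3 = x ^ 2 * |x| := by rw [pow_succ, sq_abs]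
  rw [h1] at h
  nlinarith [mul_le_mul_of_nonneg_left hx (sq_nonneg x), mul_nonneg (sq_nonneg x) (abs_nonneg x)]

lemma exp_sub_sub_exp_neg_sub_le {t u : ℝ} (htu : |t| ≤ u) (hu : u ≤ 1 / 2) :
    Real.exp (u - t) - Real.exp (-u - t) ≤ Real.exp u + t ^ 2 := by
  have hu0 : 0 ≤ u := (abs_nonneg t).trans htu
  set x := |t| with hx
  have hx0 : 0 ≤ x := abs_nonneg t
  have hxt : t ^ 2 = x ^ 2 := (sq_abs t).symm
  have e1 : Real.exp (-t) ≤ 1 + x + x ^ 2 := by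
    have h1 : |-t| ≤ 2 * x := by rw [abs_neg]; linarith
    have := exp_le_of_abs_le h1 (htu.trans hu)
    have h2 : -t ≤ x := by rw [hx]; exact neg_le_abs t
    nlinarith [sq_nonneg t]
  have e2 : (0.3678 : ℝ) ≤ Real.exp (-(2 * u)) := by
    have h1 : Real.exp (-1) ≤ Real.exp (-(2 * u)) := Real.exp_le_exp.2 (by linarith)
    have h2 : (0.3678 : ℝ) ≤ Real.exp (-1) := by
      rw [Real.exp_neg, le_inv_comm₀ (by norm_num) (Real.exp_pos 1)]
      exact Real.exp_one_lt_d9.le.trans (by norm_num)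
    linarith
  have e3 : 1 / 2 ≤ Real.exp (-u) := by linarith [Real.add_one_le_exp (-u)]
  have e4 : Real.exp (-(2 * u)) ≤ 1 := Real.exp_le_one_iff.2 (by linarith)
  have k1 : Real.exp (u - t) - Real.exp (-u - t) =
      Real.exp u * (Real.exp (-t) * (1 - Real.exp (-(2 * u)))) := by
    rw [mul_sub, mul_sub, ← Real.exp_add, mul_one, ← Real.exp_add, ← Real.exp_add]
    ring_nf
  have k2 : Real.exp u + t ^ 2 = Real.exp u * (1 + t ^ 2 * Real.exp (-u)) := by
    rw [mul_add, mul_left_comm, ← Real.exp_add]; simp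
  rw [k1, k2]
  refine mul_le_mul_of_nonneg_left ?_ (Real.exp_pos u).le
  have e5 : Real.exp (-t) * (1 - Real.exp (-(2 * u))) ≤ (1 + x + x ^ 2) * (1 - 0.3678) :=
    mul_le_mul e1 (by linarith) (by linarith) (by positivity)
  have e6 : x ^ 2 * (1 / 2) ≤ t ^ 2 * Real.exp (-u) := by
    rw [hxt]; exact mul_le_mul_of_nonneg_left e3 (sq_nonneg _)
  have e7 : x ≤ 1 / 2 := htu.trans hu
  nlinarith

end Elementary

section MainPart

variable {Ω : Type*} {X : ℕ → Ω → ℝ} {b v : ℝ}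

/-- Truncation of `X k` at level `b`, before centering. -/
noncomputable def truncPart (X : ℕ → Ω → ℝ) (b : ℝ) (k : ℕ) (ω : Ω) : ℝ :=
  if |X k ω| ≤ b then X k ω else 0

lemma abs_truncPart_le (hb : 0 ≤ b) (k : ℕ) (ω : Ω) : |truncPart X b k ω| ≤ b := by
  unfold truncPart
  split_ifs with h
  · exact h
  · simpa using hb

lemma measurable_comap_truncPart (k : ℕ) :
    Measurable[MeasurableSpace.comap (X k) inferInstance] (truncPart X b k) := by
  have h : Measurable fun x : ℝ => if |x| ≤ b then x else 0 :=
    Measurable.ite (measurableSet_le (by fun_prop) measurable_const) measurable_id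
      measurable_const
  exact h.comp (comap_measurable (X k))

lemma truncPart_sq_le {α : ℝ} (hb : 0 ≤ b) (hα1 : α < 1) (k : ℕ) (ω : Ω) :
    truncPart X b k ω ^ 2 ≤ |X k ω| ^ (1 + α) * b ^ (1 - α) := by
  unfold truncPart
  split_ifs with h
  · rw [← sq_abs, ← Real.rpow_two, show (2 : ℝ) = (1 + α) + (1 - α) by ring,
      Real.rpow_add' (abs_nonneg _) (by norm_num)]
    gcongr
  · rw [zero_pow two_ne_zero]; positivity

variable [MeasurableSpace Ω] {μ : Measure Ω}

lemma mainPart_eq_truncPart_sub (k : ℕ) (ω : Ω) :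
    mainPart μ X b k ω = truncPart X b k ω - ∫ ω', truncPart X b k ω' ∂μ := rfl

lemma integral_truncPart_sq_le {α : ℝ} (hb : 0 ≤ b) (hα1 : α < 1) {k : ℕ}
    (hint : Integrable (fun ω => |X k ω| ^ (1 + α)) μ) {ν : ℝ}
    (hν : ∫ ω, |X k ω| ^ (1 + α) ∂μ ≤ ν) :
    ∫ ω, truncPart X b k ω ^ 2 ∂μ ≤ ν * b ^ (1 - α) := by
  calc ∫ ω, truncPart X b k ω ^ 2 ∂μ ≤ ∫ ω, |X k ω| ^ (1 + α) * b ^ (1 - α) ∂μ :=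
        integral_mono_of_nonneg (ae_of_all _ fun ω => sq_nonneg _) (hint.mul_const _)
          (ae_of_all _ fun ω => truncPart_sq_le hb hα1 k ω)
    _ = (∫ ω, |X k ω| ^ (1 + α) ∂μ) * b ^ (1 - α) := integral_mul_const _ _
    _ ≤ _ := mul_le_mul_of_nonneg_right hν (by positivity)

lemma measurable_comap_mainPart (k : ℕ) :
    Measurable[MeasurableSpace.comap (X k) inferInstance] (mainPart μ X b k) :=
  (measurable_comap_truncPart k).sub_const _

lemma measurable_pastSigma_mainPart {k n : ℕ} (hk : 1 ≤ k) (hkn : k ≤ n) :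
    Measurable[pastSigma X n] (mainPart μ X b k) :=
  (measurable_comap_mainPart k).mono
    (le_iSup₂_of_le (f := fun i (_ : i ∈ Set.Icc 1 n) =>
      MeasurableSpace.comap (X i) inferInstance) k ⟨hk, hkn⟩ le_rfl) le_rfl

lemma measurable_futureSigma_mainPart {k n : ℕ} (hnk : n ≤ k) :
    Measurable[futureSigma X n] (mainPart μ X b k) :=
  (measurable_comap_mainPart k).mono
    (le_iSup₂_of_le (f := fun i (_ : i ∈ Set.Ici n) =>
      MeasurableSpace.comap (X i) inferInstance) k hnk le_rfl) le_rfl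

lemma measurable_truncPart (hX : ∀ n, Measurable (X n)) (k : ℕ) :
    Measurable (truncPart X b k) :=
  (measurable_comap_truncPart k).mono (hX k).comap_le le_rfl

lemma measurable_mainPart (hX : ∀ n, Measurable (X n)) (k : ℕ) :
    Measurable (mainPart μ X b k) :=
  (measurable_truncPart hX k).sub_const _

variable [IsProbabilityMeasure μ]

lemma integrable_truncPart (hX : ∀ n, Measurable (X n)) (hb : 0 ≤ b) (k : ℕ) :
    Integrable (truncPart X b k) μ :=
  Integrable.of_bound (measurable_truncPart hX k).aestronglyMeasurable b
    (ae_of_all _ (abs_truncPart_le hb k))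

lemma abs_integral_truncPart_le (hb : 0 ≤ b) (k : ℕ) : |∫ ω, truncPart X b k ω ∂μ| ≤ b := by
  have := norm_integral_le_of_norm_le_const (μ := μ) (f := truncPart X b k)
    (ae_of_all _ (abs_truncPart_le hb k))
  simpa using this

lemma abs_mainPart_le (hb : 0 ≤ b) (k : ℕ) (ω : Ω) : |mainPart μ X b k ω| ≤ 2 * b := by
  have h1 := abs_truncPart_le (X := X) hb k ω
  have h2 := abs_integral_truncPart_le (μ := μ) (X := X) hb k
  rw [mainPart_eq_truncPart_sub]
  exact (abs_sub _ _).trans (by linarith)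

lemma integrable_mainPart (hX : ∀ n, Measurable (X n)) (hb : 0 ≤ b) (k : ℕ) :
    Integrable (mainPart μ X b k) μ :=
  (integrable_truncPart hX hb k).sub (integrable_const _)

lemma integral_mainPart (hX : ∀ n, Measurable (X n)) (hb : 0 ≤ b) (k : ℕ) :
    ∫ ω, mainPart μ X b k ω ∂μ = 0 := by
  simp_rw [mainPart_eq_truncPart_sub]
  rw [integral_sub (integrable_truncPart hX hb k) (integrable_const _)]
  simp

lemma integral_mainPart_sq_add (hX : ∀ n, Measurable (X n)) (hb : 0 ≤ b) (k : ℕ) :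
    ∫ ω, mainPart μ X b k ω ^ 2 ∂μ + (∫ ω, truncPart X b k ω ∂μ) ^ 2 =
      ∫ ω, truncPart X b k ω ^ 2 ∂μ := by
  have hT := integrable_truncPart (μ := μ) hX hb k
  have hT2 : Integrable (fun ω => truncPart X b k ω ^ 2) μ := by
    simp_rw [pow_two]
    exact hT.bdd_mul (measurable_truncPart hX k).aestronglyMeasurable
      (ae_of_all _ (abs_truncPart_le hb k))
  simp_rw [mainPart_eq_truncPart_sub]
  set e := ∫ ω, truncPart X b k ω ∂μ with he
  have : ∀ ω, (truncPart X b k ω - e) ^ 2 =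
      (truncPart X b k ω ^ 2 + -2 * e * truncPart X b k ω) + e ^ 2 := fun ω => by ring
  simp_rw [this]
  rw [integral_add (hT2.fun_add (hT.const_mul _)) (integrable_const _),
    integral_add hT2 (hT.const_mul _), integral_const_mul, ← he]
  simp
  ring

lemma integral_mainPart_mul_le (hX : ∀ n, Measurable (X n)) (hb : 0 ≤ b)
    (hv : ∀ k, 1 ≤ k → ∫ ω, truncPart X b k ω ^ 2 ∂μ ≤ v) {k n : ℕ} (hk : 1 ≤ k) :
    ∫ ω, mainPart μ X b k ω * mainPart μ X b (k + n) ω ∂μ ≤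
      2 * Real.sqrt (phiCoef μ X n) * v := by
  have hY : ∀ k, 1 ≤ k → ∫ ω, mainPart μ X b k ω ^ 2 ∂μ ≤ v := fun k hk => by
    have := integral_mainPart_sq_add (μ := μ) hX hb k
    nlinarith [hv k hk, sq_nonneg (∫ ω, truncPart X b k ω ∂μ)]
  have hY0 : ∀ k, 0 ≤ ∫ ω, mainPart μ X b k ω ^ 2 ∂μ := fun k =>
    integral_nonneg fun ω => sq_nonneg _
  have hϕ := phiCoef_nonneg (μ := μ) X n
  have h := covariance_sq_le_of_phiMixing (μ := μ) (pastSigma_le hX k) (futureSigma_le hX (k + n))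
    hϕ (abs_measureReal_inter_sub_le_phiCoef X hk)
    (measurable_pastSigma_mainPart (μ := μ) (b := b) hk le_rfl)
    (measurable_futureSigma_mainPart (μ := μ) (b := b) le_rfl)
    (abs_mainPart_le hb k) (abs_mainPart_le hb (k + n))
  rw [integral_mainPart hX hb, zero_mul, sub_zero] at h
  have hv0 : 0 ≤ v := (hY0 k).trans (hY k hk)
  refine le_of_abs_le (abs_le_of_sq_le_sq (h.trans ?_) (by positivity))
  calc _ ≤ 4 * phiCoef μ X n * v * v :=
        mul_le_mul (mul_le_mul_of_nonneg_left (hY k hk) (by positivity)) (hY _ (by omega))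
          (hY0 _) (by positivity)
    _ = _ := by rw [mul_pow, mul_pow, Real.sq_sqrt hϕ]; ring

/-- Second moment of a block of `q` consecutive main parts. -/
lemma integral_sum_mainPart_sq_le (hX : ∀ n, Measurable (X n)) (hb : 0 ≤ b)
    (hv : ∀ k, 1 ≤ k → ∫ ω, truncPart X b k ω ^ 2 ∂μ ≤ v) (a q : ℕ) :
    ∫ ω, (∑ j ∈ Finset.range q, mainPart μ X b (a + j + 1) ω) ^ 2 ∂μ ≤
      v * (q + 4 * ∑ p ∈ Finset.range q, ∑ k ∈ Finset.range p,
        Real.sqrt (phiCoef μ X (k + 1))) := by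
  have hYY : ∀ i j, Integrable (fun ω => mainPart μ X b i ω * mainPart μ X b j ω) μ := fun i j =>
    (integrable_mainPart hX hb j).bdd_mul (measurable_mainPart hX i).aestronglyMeasurable
      (ae_of_all _ (abs_mainPart_le hb i))
  induction q with
  | zero => simp
  | succ q ih =>
    have hS2 : Integrable
        (fun ω => (∑ j ∈ Finset.range q, mainPart μ X b (a + j + 1) ω) ^ 2) μ := by
      simp_rw [pow_two, Finset.sum_mul_sum]
      exact integrable_finsetSum _ fun i _ => integrable_finsetSum _ fun j _ => hYY _ _
    have hcross : ∫ ω, (∑ j ∈ Finset.range q,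
          mainPart μ X b (a + j + 1) ω * mainPart μ X b (a + q + 1) ω) ∂μ ≤
        2 * v * ∑ k ∈ Finset.range q, Real.sqrt (phiCoef μ X (k + 1)) := by
      rw [integral_finsetSum _ fun i _ => hYY _ _, ← Finset.sum_range_reflect, Finset.mul_sum]
      refine Finset.sum_le_sum fun j hj => ?_
      have hj' := Finset.mem_range.1 hj
      have := integral_mainPart_mul_le (n := j + 1) (k := a + (q - 1 - j) + 1) hX hb hv (by omega)
      rw [show a + (q - 1 - j) + 1 + (j + 1) = a + q + 1 by omega] at this
      linarith
    have hlast : ∫ ω, mainPart μ X b (a + q + 1) ω * mainPart μ X b (a + q + 1) ω ∂μ ≤ v := by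
      have h1 := integral_mainPart_sq_add (μ := μ) hX hb (a + q + 1)
      simp_rw [← pow_two]
      nlinarith [hv (a + q + 1) (by omega), sq_nonneg (∫ ω, truncPart X b (a + q + 1) ω ∂μ)]
    have hexp : ∀ ω, (∑ j ∈ Finset.range (q + 1), mainPart μ X b (a + j + 1) ω) ^ 2 =
        (∑ j ∈ Finset.range q, mainPart μ X b (a + j + 1) ω) ^ 2 +
        2 * (∑ j ∈ Finset.range q,
          mainPart μ X b (a + j + 1) ω * mainPart μ X b (a + q + 1) ω) +
        mainPart μ X b (a + q + 1) ω * mainPart μ X b (a + q + 1) ω := fun ω => by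
      rw [Finset.sum_range_succ, ← Finset.sum_mul]; ring
    have hC : Integrable (fun ω => 2 * (∑ j ∈ Finset.range q,
          mainPart μ X b (a + j + 1) ω * mainPart μ X b (a + q + 1) ω)) μ :=
      (integrable_finsetSum _ fun i _ => hYY _ _).const_mul _
    simp_rw [hexp]
    rw [integral_add (hS2.fun_add hC) (hYY _ _), integral_add hS2 hC, integral_const_mul,
      Finset.sum_range_succ _ q]
    push_cast
    linarith

end MainPart

section Blocks

variable {Ω : Type*} [MeasurableSpace Ω] {μ : Measure Ω} [IsProbabilityMeasure μ]
  {X : ℕ → Ω → ℝ} {b v Φ ε θ : ℝ} {m : ℕ}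

lemma abs_sum_mainPart_le (hb : 0 ≤ b) (a m : ℕ) (ω : Ω) :
    |∑ j ∈ Finset.range m, mainPart μ X b (a + j + 1) ω| ≤ m * (2 * b) := by
  refine (Finset.abs_sum_le_sum_abs _ _).trans ?_
  refine (Finset.sum_le_sum fun j _ => abs_mainPart_le (μ := μ) hb (a + j + 1) ω).trans ?_
  simp

/-- Exponential moment of a single block. -/
lemma integral_exp_block_le (hX : ∀ n, Measurable (X n)) (hb : 0 ≤ b)
    (hv : ∀ k, 1 ≤ k → ∫ ω, truncPart X b k ω ^ 2 ∂μ ≤ v)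
    (hΦ : ∑ k ∈ Finset.range m, Real.sqrt (phiCoef μ X (k + 1)) ≤ Φ)
    (hε0 : 0 ≤ ε) (hε : ε ≤ 1 / 2) (hθ : 0 ≤ θ) (hθb : 2 * θ * m * b ≤ ε) (a : ℕ) :
    ∫ ω, Real.exp (2 * θ * ∑ j ∈ Finset.range m, mainPart μ X b (a + j + 1) ω) ∂μ ≤
      1 + 2 * θ ^ 2 * (1 + ε) *
        (v * (m + 4 * m * Φ - 2 * m ^ 2 * Real.sqrt (phiCoef μ X m))) := by
  set ξ : Ω → ℝ := fun ω => ∑ j ∈ Finset.range m, mainPart μ X b (a + j + 1) ω with hξ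
  have hξb : ∀ ω, |ξ ω| ≤ m * (2 * b) := abs_sum_mainPart_le hb a m
  have hξm : Measurable ξ := Finset.measurable_sum _ fun j _ => measurable_mainPart hX _
  have hξi : Integrable ξ μ := Integrable.of_bound hξm.aestronglyMeasurable _ (ae_of_all _ hξb)
  have hξ2 : Integrable (fun ω => ξ ω ^ 2) μ := by
    simp_rw [pow_two]
    exact hξi.bdd_mul hξm.aestronglyMeasurable (ae_of_all _ hξb)
  have hξ0 : ∫ ω, ξ ω ∂μ = 0 := by
    rw [hξ, integral_finsetSum _ fun j _ => integrable_mainPart hX hb _]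
    exact Finset.sum_eq_zero fun j _ => integral_mainPart hX hb _
  have hpt : ∀ ω, Real.exp (2 * θ * ξ ω) ≤
      (1 + 2 * θ * ξ ω) + (2 * θ ^ 2 * (1 + ε)) * ξ ω ^ 2 := fun ω => by
    have h1 : |2 * θ * ξ ω| ≤ 2 * ε := by
      rw [abs_mul, abs_of_nonneg (by positivity)]
      have := mul_le_mul_of_nonneg_left (hξb ω) (show 0 ≤ 2 * θ by positivity)
      linarith
    have := exp_le_of_abs_le h1 hε
    linarith
  have hv0 : 0 ≤ v := (integral_nonneg fun ω => sq_nonneg _).trans (hv 1 le_rfl)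
  have hsq : ∫ ω, ξ ω ^ 2 ∂μ ≤
      v * (m + 4 * m * Φ - 2 * m ^ 2 * Real.sqrt (phiCoef μ X m)) := by
    refine (integral_sum_mainPart_sq_le hX hb hv a m).trans (mul_le_mul_of_nonneg_left ?_ hv0)
    have := sum_partial_sums_le (s := fun k => Real.sqrt (phiCoef μ X k))
      (fun i j hij => Real.sqrt_le_sqrt (phiCoef_antitone X hij)) (fun _ => Real.sqrt_nonneg _) hΦ
    linarith
  have hlin : Integrable (fun ω => 1 + 2 * θ * ξ ω) μ :=
    (integrable_const (1 : ℝ)).fun_add (hξi.const_mul (2 * θ))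
  calc ∫ ω, Real.exp (2 * θ * ξ ω) ∂μ
      ≤ ∫ ω, (1 + 2 * θ * ξ ω) + (2 * θ ^ 2 * (1 + ε)) * ξ ω ^ 2 ∂μ :=
        integral_mono_of_nonneg (ae_of_all _ fun ω => (Real.exp_pos _).le)
          (hlin.add (hξ2.const_mul _)) (ae_of_all _ hpt)
    _ = 1 + 2 * θ ^ 2 * (1 + ε) * ∫ ω, ξ ω ^ 2 ∂μ := by
        rw [integral_add hlin (hξ2.const_mul _),
          integral_add (integrable_const _) (hξi.const_mul _), integral_const_mul,
          integral_const_mul, hξ0]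
        simp
    _ ≤ _ := by gcongr

/-- Range of the exponential of a single block. -/
lemma exists_bounds_exp_block (hX : ∀ n, Measurable (X n)) (hb : 0 ≤ b)
    (hv : ∀ k, 1 ≤ k → ∫ ω, truncPart X b k ω ^ 2 ∂μ ≤ v)
    (hε : ε ≤ 1 / 2) (hθ : 0 ≤ θ) (hθb : 2 * θ * m * b ≤ ε) (a : ℕ) :
    ∃ c d : ℝ, d - c ≤ Real.exp ε + 4 * θ ^ 2 * m ^ 2 * v ∧ ∀ ω,
      c ≤ Real.exp (2 * θ * ∑ j ∈ Finset.range m, mainPart μ X b (a + j + 1) ω) ∧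
      Real.exp (2 * θ * ∑ j ∈ Finset.range m, mainPart μ X b (a + j + 1) ω) ≤ d := by
  set e : ℕ → ℝ := fun k => ∫ ω, truncPart X b k ω ∂μ with he
  set t : ℝ := 2 * θ * ∑ j ∈ Finset.range m, e (a + j + 1) with ht
  set u : ℝ := 2 * θ * m * b with hu
  have habs : ∀ {f : ℕ → ℝ}, (∀ k, |f k| ≤ b) →
      |2 * θ * ∑ j ∈ Finset.range m, f (a + j + 1)| ≤ u := by
    intro f hf
    have h1 : |∑ j ∈ Finset.range m, f (a + j + 1)| ≤ m * b :=
      (Finset.abs_sum_le_sum_abs _ _).trans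
        ((Finset.sum_le_sum fun j _ => hf (a + j + 1)).trans (by simp))
    rw [abs_mul, abs_of_nonneg (by positivity : 0 ≤ 2 * θ)]
    have := mul_le_mul_of_nonneg_left h1 (show 0 ≤ 2 * θ by positivity)
    linarith
  have htu : |t| ≤ u := habs fun k => abs_integral_truncPart_le hb k
  have ht2 : t ^ 2 ≤ 4 * θ ^ 2 * m ^ 2 * v := by
    have h1 : (∑ j ∈ Finset.range m, e (a + j + 1)) ^ 2 ≤ m * (m * v) := by
      refine (sq_sum_le_card_mul_sum_sq).trans ?_
      rw [Finset.card_range]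
      refine mul_le_mul_of_nonneg_left ?_ (Nat.cast_nonneg m)
      refine (Finset.sum_le_sum fun j _ => (?_ : e (a + j + 1) ^ 2 ≤ v)).trans (by simp)
      have h2 := integral_mainPart_sq_add (μ := μ) hX hb (a + j + 1)
      have h3 : 0 ≤ ∫ ω, mainPart μ X b (a + j + 1) ω ^ 2 ∂μ :=
        integral_nonneg fun ω => sq_nonneg _
      linarith [hv (a + j + 1) (by omega)]
    rw [ht, mul_pow]
    have := mul_le_mul_of_nonneg_left h1 (sq_nonneg (2 * θ))
    linarith
  refine ⟨Real.exp (-u - t), Real.exp (u - t), ?_, fun ω => ?_⟩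
  · have h1 := exp_sub_sub_exp_neg_sub_le htu (hθb.trans hε)
    have h2 := Real.exp_le_exp.2 hθb
    linarith
  · have h1 : 2 * θ * ∑ j ∈ Finset.range m, mainPart μ X b (a + j + 1) ω =
        2 * θ * ∑ j ∈ Finset.range m, truncPart X b (a + j + 1) ω - t := by
      simp_rw [mainPart_eq_truncPart_sub, Finset.sum_sub_distrib, mul_sub, ht, he]
    have h2 := abs_le.1 (habs fun k => abs_truncPart_le (X := X) hb k ω)
    rw [h1, Real.exp_le_exp, Real.exp_le_exp]
    constructor <;> linarith [h2.1, h2.2]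

/-- Exponential moment of a sum of blocks separated by gaps of length at least `m`. -/
lemma integral_exp_sum_blocks_le (hX : ∀ n, Measurable (X n)) (hb : 0 ≤ b) (hm : 1 ≤ m)
    (hv : ∀ k, 1 ≤ k → ∫ ω, truncPart X b k ω ^ 2 ∂μ ≤ v)
    (hΦ : ∑ k ∈ Finset.range m, Real.sqrt (phiCoef μ X (k + 1)) ≤ Φ)
    (hε0 : 0 ≤ ε) (hε : ε ≤ 1 / 2) (hθ : 0 ≤ θ) (hθb : 2 * θ * m * b ≤ ε)
    {a : ℕ → ℕ} (ha : ∀ i, a i + m + m ≤ a (i + 1) + 1) (l : ℕ) :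
    ∫ ω, Real.exp (2 * θ * ∑ i ∈ Finset.range l, ∑ j ∈ Finset.range m,
        mainPart μ X b (a i + j + 1) ω) ∂μ ≤
      Real.exp (Real.exp ε * phiCoef μ X m +
        2 * θ ^ 2 * m * v * (1 + 4 * Φ) * (1 + ε)) ^ l := by
  set s := Real.sqrt (phiCoef μ X m) with hs
  have hϕ0 := phiCoef_nonneg (μ := μ) X m
  have hϕs : phiCoef μ X m ≤ s := by
    have h1 : s ≤ 1 := Real.sqrt_le_one.2 (phiCoef_le_one X m)
    have h2 : 0 ≤ s := Real.sqrt_nonneg _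
    have h3 : s ^ 2 = phiCoef μ X m := Real.sq_sqrt hϕ0
    nlinarith
  have hv0 : 0 ≤ v := (integral_nonneg fun ω => sq_nonneg _).trans (hv 1 le_rfl)
  set Q := Real.exp (Real.exp ε * phiCoef μ X m +
        2 * θ ^ 2 * m * v * (1 + 4 * Φ) * (1 + ε)) with hQ
  have hfac : ∀ {x δ : ℝ}, x ≤ 1 + 2 * θ ^ 2 * (1 + ε) * (v * (m + 4 * m * Φ - 2 * m ^ 2 * s)) →
      δ ≤ Real.exp ε + 4 * θ ^ 2 * m ^ 2 * v → x + phiCoef μ X m * δ ≤ Q := by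
    intro x δ hx hδ
    have h1 := mul_le_mul_of_nonneg_left hδ hϕ0
    have hw : 0 ≤ 4 * θ ^ 2 * m ^ 2 * v := by positivity
    have h2 := mul_le_mul_of_nonneg_right hϕs hw
    have h3 : 0 ≤ ε * (s * (4 * θ ^ 2 * m ^ 2 * v)) :=
      mul_nonneg hε0 (mul_nonneg (Real.sqrt_nonneg _) hw)
    have h4 := Real.add_one_le_exp (Real.exp ε * phiCoef μ X m +
        2 * θ ^ 2 * m * v * (1 + 4 * Φ) * (1 + ε))
    rw [← hQ] at h4
    nlinarith
  have hmono : Monotone a := monotone_nat_of_le_succ fun i => by have := ha i; omega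
  induction l with
  | zero => simp
  | succ l ih =>
    set V : Ω → ℝ := fun ω =>
      Real.exp (2 * θ * ∑ j ∈ Finset.range m, mainPart μ X b (a l + j + 1) ω) with hV
    set W : Ω → ℝ := fun ω => Real.exp (2 * θ * ∑ i ∈ Finset.range l, ∑ j ∈ Finset.range m,
        mainPart μ X b (a i + j + 1) ω) with hW
    have hWV : ∀ ω, Real.exp (2 * θ * ∑ i ∈ Finset.range (l + 1), ∑ j ∈ Finset.range m,
        mainPart μ X b (a i + j + 1) ω) = W ω * V ω := fun ω => by
      rw [Finset.sum_range_succ, mul_add, Real.exp_add]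
    simp_rw [hWV]
    obtain ⟨c, d, hcd, hb'⟩ := exists_bounds_exp_block (μ := μ) hX hb hv hε hθ hθb (a l)
    have hEV := integral_exp_block_le hX hb hv hΦ hε0 hε hθ hθb (a l)
    have hfac' : ∫ ω, V ω ∂μ + phiCoef μ X m * (d - c) ≤ Q := hfac hEV hcd
    suffices hstep : ∫ ω, W ω * V ω ∂μ ≤
        (∫ ω, W ω ∂μ) * (∫ ω, V ω ∂μ + phiCoef μ X m * (d - c)) by
      have hW0 : 0 ≤ ∫ ω, W ω ∂μ := integral_nonneg fun ω => (Real.exp_pos _).le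
      calc _ ≤ _ := hstep
        _ ≤ (∫ ω, W ω ∂μ) * Q := mul_le_mul_of_nonneg_left hfac' hW0
        _ ≤ Q ^ l * Q := mul_le_mul_of_nonneg_right ih (Real.exp_pos _).le
        _ = _ := (pow_succ _ _).symm
    rcases l with - | l
    · obtain ⟨ω₀⟩ : Nonempty Ω := nonempty_of_isProbabilityMeasure μ
      have h1 : 0 ≤ phiCoef μ X m * (d - c) :=
        mul_nonneg hϕ0 (sub_nonneg.2 ((hb' ω₀).1.trans (hb' ω₀).2))
      simpa [hW] using h1
    · refine integral_mul_le_of_phiMixing (pastSigma_le hX (a l + m))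
        (futureSigma_le hX (a l + m + m))
        (abs_measureReal_inter_sub_le_phiCoef X (by omega)) ?_ ?_
        (M := Real.exp (2 * θ * ∑ _i ∈ Finset.range (l + 1), (m * (2 * b) : ℝ)))
        (fun ω => (Real.exp_pos _).le) (fun ω => ?_) (fun ω => (hb' ω).1) (fun ω => (hb' ω).2)
      · refine Real.measurable_exp.comp (Measurable.const_mul ?_ _)
        refine Finset.measurable_sum _ fun i hi => Finset.measurable_sum _ fun j hj => ?_
        have h1 := hmono (Nat.lt_succ_iff.1 (Finset.mem_range.1 hi))
        have h2 := Finset.mem_range.1 hj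
        exact measurable_pastSigma_mainPart (by omega) (by omega)
      · refine Real.measurable_exp.comp (Measurable.const_mul ?_ _)
        refine Finset.measurable_sum _ fun j hj => ?_
        have h1 := ha l
        exact measurable_futureSigma_mainPart (by omega)
      · refine Real.exp_le_exp.2 (mul_le_mul_of_nonneg_left ?_ (by positivity))
        exact Finset.sum_le_sum fun i _ => le_of_abs_le (abs_sum_mainPart_le hb (a i) m ω)

end Blocks

/-- inequalities (15)-(16) of the paper: for the odd blocks
`ξ_i = ∑_{j=1}^m Y_{2(i-1)m+j}` and the even blocks `η_i = ∑_{j=1}^m Y_{(2i-1)m+j}` of the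
main parts, and `θ > 0` with `2θmb ≤ ε ≤ 1/2`,
`E(exp(2θ ∑_{i=1}^l ξ_i)) ≤ exp(e^ε φ(m) l)·exp(2θ²mlνα(1+4φ)b^{1-α}(1+ε))`,
and the same bound holds for the `η_i`. -/
theorem block_exp_moment_bound
    {Ω : Type*} [MeasurableSpace Ω] (μ : Measure Ω) [IsProbabilityMeasure μ]
    (X : ℕ → Ω → ℝ) (hmeas : ∀ n, Measurable (X n))
    (r C : ℝ) (hr : 2 < r) (hC : 0 < C)
    (hmix : ∀ m : ℕ, 1 ≤ m → phiCoef μ X m ≤ C * ((m : ℝ) + 1) ^ (-r))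
    (α να : ℝ) (hα0 : 0 < α) (hα1 : α < 1)
    (hint : ∀ n : ℕ, 1 ≤ n → Integrable (fun ω => |X n ω| ^ (1 + α)) μ)
    (hbdd : BddAbove (Set.range fun n : ℕ => ∫ ω, |X (n + 1) ω| ^ (1 + α) ∂μ))
    (hνα : να = ⨆ n : ℕ, ∫ ω, |X (n + 1) ω| ^ (1 + α) ∂μ) (hνpos : 0 < να)
    (φ : ℝ) (hφ : φ = phiSum μ X)
    (b : ℝ) (hb : 0 < b) (m l : ℕ) (hm : 1 ≤ m) (hl : 1 ≤ l)
    (ε θ : ℝ) (hε0 : 0 < ε) (hε2 : ε ≤ 1/2) (hθ : 0 < θ)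
    (hθmb : 2 * θ * m * b ≤ ε) :
    (∫ ω, Real.exp (2 * θ *
        ∑ i ∈ Finset.Icc 1 l, ∑ j ∈ Finset.Icc 1 m, mainPart μ X b (2*(i-1)*m + j) ω) ∂μ ≤
      Real.exp (Real.exp ε * phiCoef μ X m * l) *
        Real.exp (2 * θ ^ 2 * m * l * να * (1 + 4 * φ) * b ^ (1 - α) * (1 + ε))) ∧
    ∫ ω, Real.exp (2 * θ *
        ∑ i ∈ Finset.Icc 1 l, ∑ j ∈ Finset.Icc 1 m, mainPart μ X b ((2*i-1)*m + j) ω) ∂μ ≤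
      Real.exp (Real.exp ε * phiCoef μ X m * l) *
        Real.exp (2 * θ ^ 2 * m * l * να * (1 + 4 * φ) * b ^ (1 - α) * (1 + ε)) := by
  have hν : ∀ k, 1 ≤ k → ∫ ω, |X k ω| ^ (1 + α) ∂μ ≤ να := fun k hk => by
    obtain ⟨n, rfl⟩ := Nat.exists_eq_add_of_le' hk
    rw [hνα]
    exact le_ciSup hbdd n
  have hv : ∀ k, 1 ≤ k → ∫ ω, truncPart X b k ω ^ 2 ∂μ ≤ να * b ^ (1 - α) := fun k hk =>
    integral_truncPart_sq_le hb.le hα1 (hint k hk) (hν k hk)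
  have hΦ : ∑ k ∈ Finset.range m, Real.sqrt (phiCoef μ X (k + 1)) ≤ φ := by
    rw [hφ]
    exact (summable_sqrt_phiCoef hr hC hmix).sum_le_tsum _ fun _ _ => Real.sqrt_nonneg _
  have key : ∀ a : ℕ → ℕ, (∀ i, a i + m + m ≤ a (i + 1) + 1) →
      ∫ ω, Real.exp (2 * θ * ∑ i ∈ Finset.range l, ∑ j ∈ Finset.range m,
        mainPart μ X b (a i + j + 1) ω) ∂μ ≤
      Real.exp (Real.exp ε * phiCoef μ X m * l) *
        Real.exp (2 * θ ^ 2 * m * l * να * (1 + 4 * φ) * b ^ (1 - α) * (1 + ε)) := by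
    intro a ha
    refine (integral_exp_sum_blocks_le hmeas hb.le hm hv hΦ hε0.le hε2 hθ.le hθmb ha l).trans
      (le_of_eq ?_)
    rw [← Real.exp_nat_mul, ← Real.exp_add]
    congr 1
    ring
  simp only [sum_Icc_one_eq_sum_range]
  constructor
  · refine le_trans (le_of_eq ?_) (key (fun i => 2 * i * m) fun i => by nlinarith)
    simp only [Nat.add_sub_cancel, add_assoc]
  · refine le_trans (le_of_eq ?_) (key (fun i => (2 * i + 1) * m) fun i => by nlinarith)
    have : ∀ i, 2 * (i + 1) - 1 = 2 * i + 1 := fun i => by omega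
    simp only [this, add_assoc]
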